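/- Fix 0 < α < 1, Δ > 0, ρ ≥ 0, γ ≥ 0 and π ∈ ℝ. With η(α,λ) := 1 + (1/2)(α − 1 + λ − √(4λ + (α − 1 + λ)²)), as λ → 0⁺ the expression g(α,Δ,ρ,η(α,λ))·(1 − π² A(η(α,λ))) converges to π²(α − 1)(α²γ + 2α − 1)/(αγ + 1)² − ((α − 1)²ρ + Δ)/(α − 1), and the expression t(α,Δ,ρ,η(α,λ))·(1 − π² A(η(α,λ))) converges to 0. -/

import Mathlib

open Filter

/-- The effective regularization parameter
`η(α,λ) := 1 + (1/2)(α − 1 + λ − √(4λ + (α − 1 + λ)²))`. -/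
noncomputable def etaFun (α lam : ℝ) : ℝ :=
  1 + (1/2) * (α - 1 + lam - Real.sqrt (4*lam + (α - 1 + lam)^2))

/-- The correction factor `A(η)`. -/
noncomputable def AFun (Δ ρ γ η : ℝ) : ℝ :=
  (η-1)^2 * (γ*η^2 + 2*η - 1) / ((Δ + (η-1)^2*ρ) * (1+γ*η)^2)

/-- The Gaussian generalization error `g(α,Δ,ρ,η)`. -/
noncomputable def gFun (α Δ ρ η : ℝ) : ℝ :=
  α * (Δ + (η-1)^2*ρ) / (α - η^2)

/-- The Gaussian training error `t(α,Δ,ρ,η)`. -/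
noncomputable def tFun (α Δ ρ η : ℝ) : ℝ :=
  (α-η)^2 * (Δ + (η-1)^2*ρ) / (α * (α - η^2))

/-!
Since `√((α - 1)²) = |α - 1|`, the continuous function `η(α, ·)` takes the value `min α 1` at `0`,
which is `α` in the overparametrized regime. The generalization error is a continuous function of
`η` near `α`, so its limit is its value at `η = α`. The training error is `((α - η) / α)²` times the
generalization error, so it vanishes in the limit.
-/

open scoped Topology

theorem etaFun_zero (α : ℝ) : etaFun α 0 = min α 1 := by
  have sqrt_eq : √(4 * 0 + (α - 1 + 0) ^ 2) = |α - 1| := by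
    rw [mul_zero, zero_add, add_zero, Real.sqrt_sq_eq_abs]
  rw [etaFun, sqrt_eq]
  rcases le_total α 1 with h | h
  · rw [min_eq_left h, abs_of_nonpos (sub_nonpos.mpr h)]
    ring
  · rw [min_eq_right h, abs_of_nonneg (sub_nonneg.mpr h)]
    ring

theorem continuous_etaFun (α : ℝ) : Continuous (etaFun α) := by
  unfold etaFun
  fun_prop

theorem tendsto_etaFun_nhds_zero (α : ℝ) : Tendsto (etaFun α) (𝓝 0) (𝓝 (min α 1)) :=
  etaFun_zero α ▸ (continuous_etaFun α).tendsto 0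

section FixedParameters

variable {α Δ ρ γ η : ℝ}

theorem continuousAt_AFun (hD : Δ + (η - 1) ^ 2 * ρ ≠ 0) (hG : 1 + γ * η ≠ 0) :
    ContinuousAt (AFun Δ ρ γ) η := by
  unfold AFun
  exact .div (by fun_prop) (by fun_prop) (mul_ne_zero hD (pow_ne_zero 2 hG))

theorem continuousAt_gFun (h : α - η ^ 2 ≠ 0) : ContinuousAt (gFun α Δ ρ) η := by
  unfold gFun
  exact .div (by fun_prop) (by fun_prop) h

theorem tFun_eq_sq_mul_gFun (hα : α ≠ 0) :
    tFun α Δ ρ η = ((α - η) / α) ^ 2 * gFun α Δ ρ η := by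
  unfold tFun gFun
  field_simp

theorem gFun_self (hα : α ≠ 0) : gFun α Δ ρ α = (Δ + (α - 1) ^ 2 * ρ) / (1 - α) := by
  rw [gFun, show α - α ^ 2 = α * (1 - α) by ring, mul_div_mul_left _ _ hα]

theorem gFun_self_mul_one_sub_AFun_self (π : ℝ) (hα0 : α ≠ 0) (hα1 : α ≠ 1)
    (hD : Δ + (α - 1) ^ 2 * ρ ≠ 0) :
    gFun α Δ ρ α * (1 - π ^ 2 * AFun Δ ρ γ α) =
      π ^ 2 * (α - 1) * (α ^ 2 * γ + 2 * α - 1) / (α * γ + 1) ^ 2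
        - ((α - 1) ^ 2 * ρ + Δ) / (α - 1) := by
  have one_sub_ne_zero : 1 - α ≠ 0 := sub_ne_zero.mpr hα1.symm
  have gFun_mul_AFun : gFun α Δ ρ α * AFun Δ ρ γ α =
      (1 - α) * (α ^ 2 * γ + 2 * α - 1) / (α * γ + 1) ^ 2 := by
    rw [gFun_self hα0, AFun, div_mul_div_comm, mul_left_comm (1 - α), mul_div_mul_left _ _ hD,
      show (α - 1) ^ 2 * (γ * α ^ 2 + 2 * α - 1)
        = (1 - α) * ((1 - α) * (α ^ 2 * γ + 2 * α - 1)) by ring,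
      mul_div_mul_left _ _ one_sub_ne_zero, show 1 + γ * α = α * γ + 1 by ring]
  calc gFun α Δ ρ α * (1 - π ^ 2 * AFun Δ ρ γ α)
      = gFun α Δ ρ α - π ^ 2 * (gFun α Δ ρ α * AFun Δ ρ γ α) := by ring
    _ = (Δ + (α - 1) ^ 2 * ρ) / (1 - α)
        - π ^ 2 * ((1 - α) * (α ^ 2 * γ + 2 * α - 1) / (α * γ + 1) ^ 2) := by
      rw [gFun_mul_AFun, gFun_self hα0]
    _ = _ := by
      rw [← neg_sub α 1, div_neg]
      ring

theorem tendsto_gFun_mul_one_sub_AFun (π : ℝ) (hα0 : α ≠ 0) (hα1 : α ≠ 1)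
    (hD : Δ + (α - 1) ^ 2 * ρ ≠ 0) (hG : 1 + γ * α ≠ 0) :
    Tendsto (fun η => gFun α Δ ρ η * (1 - π ^ 2 * AFun Δ ρ γ η)) (𝓝 α)
      (𝓝 (π ^ 2 * (α - 1) * (α ^ 2 * γ + 2 * α - 1) / (α * γ + 1) ^ 2
        - ((α - 1) ^ 2 * ρ + Δ) / (α - 1))) := by
  have sub_sq_ne_zero : α - α ^ 2 ≠ 0 := by
    rw [show α - α ^ 2 = α * (1 - α) by ring]
    exact mul_ne_zero hα0 (sub_ne_zero.mpr hα1.symm)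
  rw [← gFun_self_mul_one_sub_AFun_self π hα0 hα1 hD]
  exact (continuousAt_gFun sub_sq_ne_zero).mul
    (continuousAt_const.sub (continuousAt_const.mul (continuousAt_AFun hD hG)))

theorem tendsto_tFun_mul_one_sub_AFun (π : ℝ) (hα0 : α ≠ 0) (hα1 : α ≠ 1)
    (hD : Δ + (α - 1) ^ 2 * ρ ≠ 0) (hG : 1 + γ * α ≠ 0) :
    Tendsto (fun η => tFun α Δ ρ η * (1 - π ^ 2 * AFun Δ ρ γ η)) (𝓝 α) (𝓝 0) := by
  have factor_tendsto : Tendsto (fun η => ((α - η) / α) ^ 2) (𝓝 α) (𝓝 0) :=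
    Continuous.tendsto' (by fun_prop) _ _ (by simp)
  simpa only [tFun_eq_sq_mul_gFun hα0, mul_assoc, zero_mul] using
    factor_tendsto.mul (tendsto_gFun_mul_one_sub_AFun π hα0 hα1 hD hG)

theorem overparam_vanishing_regularization_general (π : ℝ) (hα0 : α ≠ 0) (hα1 : α < 1)
    (hD : Δ + (α - 1) ^ 2 * ρ ≠ 0) (hG : 1 + γ * α ≠ 0) :
    Tendsto (fun lam => gFun α Δ ρ (etaFun α lam) * (1 - π ^ 2 * AFun Δ ρ γ (etaFun α lam)))
      (𝓝 0)
      (𝓝 (π ^ 2 * (α - 1) * (α ^ 2 * γ + 2 * α - 1) / (α * γ + 1) ^ 2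
        - ((α - 1) ^ 2 * ρ + Δ) / (α - 1))) ∧
    Tendsto (fun lam => tFun α Δ ρ (etaFun α lam) * (1 - π ^ 2 * AFun Δ ρ γ (etaFun α lam)))
      (𝓝 0) (𝓝 0) := by
  have etaFun_tendsto : Tendsto (etaFun α) (𝓝 0) (𝓝 α) := by
    simpa only [min_eq_left hα1.le] using tendsto_etaFun_nhds_zero α
  exact ⟨(tendsto_gFun_mul_one_sub_AFun π hα0 hα1.ne hD hG).comp etaFun_tendsto,
    (tendsto_tFun_mul_one_sub_AFun π hα0 hα1.ne hD hG).comp etaFun_tendsto⟩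

end FixedParameters

/-- In the overparametrized regime `0 < α < 1`, as `λ → 0⁺` the generalization
error `g·(1 − π²A)` tends to
`π²(α − 1)(α²γ + 2α − 1)/(αγ + 1)² − ((α − 1)²ρ + Δ)/(α − 1)`, and the training
error `t·(1 − π²A)` tends to `0`. -/
theorem overparam_vanishing_regularization
    (α Δ ρ γ π : ℝ) (hα0 : 0 < α) (hα1 : α < 1) (hΔ : 0 < Δ) (hρ : 0 ≤ ρ)
    (hγ : 0 ≤ γ) :
    Tendsto
      (fun lam : ℝ =>
        gFun α Δ ρ (etaFun α lam) * (1 - π^2 * AFun Δ ρ γ (etaFun α lam)))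
      (nhdsWithin 0 (Set.Ioi 0))
      (nhds (π^2 * (α - 1) * (α^2*γ + 2*α - 1) / (α*γ + 1)^2
        - ((α - 1)^2 * ρ + Δ) / (α - 1))) ∧
    Tendsto
      (fun lam : ℝ =>
        tFun α Δ ρ (etaFun α lam) * (1 - π^2 * AFun Δ ρ γ (etaFun α lam)))
      (nhdsWithin 0 (Set.Ioi 0)) (nhds 0) :=
  (overparam_vanishing_regularization_general π hα0.ne' hα1 (by positivity) (by positivity)).imp
    (·.mono_left nhdsWithin_le_nhds) (·.mono_left nhdsWithin_le_nhds)
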